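/- Assume the Gibbs setup below, and suppose Σ_{n=0}^M n·α(n) · Σ_{x∈𝒳} ν(x)·h(x) < c < κ·max_{x∈𝒳} h(x). Let λ > 0 satisfy Σ_{n=0}^M Σ_{x∈𝒳} n·h(x)·γ(n,x) = c, where γ(n,x) := α(n)·ν(x)·exp(λ·n·h(x))/(Σ_{y∈𝒳} ν(y)·exp(λ·n·h(y))), and set ψ_γ(x) := (1/κ)·Σ_{n=0}^M n·γ(n,x) and μ*(x,m) := γ(card m, x)·((card m)!/∏_{a∈𝒳}(multiplicity of a in m)!)·∏_{a∈m} ψ_γ(a) for (x,m) ∈ T₁. Then: (i) μ* is a probability mass function on T₁ with Σ_τ μ*(τ)·f(τ) = c; (ii) 𝕴(μ*) = H(γ ‖ α⊗ν); and (iii) for every probability mass function μ on T₁ with Σ_τ μ(τ)·f(τ) ≥ c one has 𝕴(μ) ≥ H(γ ‖ α⊗ν), with equality if and only if μ = μ*. -/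

import Mathlib

open scoped BigOperators ENNReal Classical

noncomputable section

/-- Depth-1 rooted marked trees without edge marks: the root mark together with the
multiset of vertex marks of the neighbors of the root. -/
abbrev T1 (𝒳 : Type) : Type := 𝒳 × Multiset 𝒳

section Defs

variable {𝒳 : Type} [Fintype 𝒳] [DecidableEq 𝒳]

/-- Degree of the root of a depth-1 tree. -/
def deg (τ : T1 𝒳) : ℕ := Multiset.card τ.2

/-- Multinomial coefficient `card m ! / ∏ₐ (multiplicity of a in m)!`. -/
def ordCoeff (m : Multiset 𝒳) : ℝ :=
  (Nat.factorial (Multiset.card m) : ℝ) /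
    ∏ a ∈ m.toFinset, (Nat.factorial (m.count a) : ℝ)

/-- The law `η₁` on `T1` with root-degree distribution `Q` and i.i.d. vertex marks:
`η₁ (x, m) = ν x · Q (card m) · (card m)!/∏ₐ count a ! · ∏_{a ∈ m} ν a`. -/
def eta1 (ν : 𝒳 → ℝ) (Q : ℕ → ℝ) (τ : T1 𝒳) : ℝ :=
  ν τ.1 * Q (Multiset.card τ.2) * ordCoeff τ.2 * (τ.2.map ν).prod

/-- Mean root degree `β = ∑_τ μ τ · deg τ`. -/
def meanDeg (μ : T1 𝒳 → ℝ) : ℝ := ∑' τ : T1 𝒳, μ τ * (deg τ : ℝ)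

/-- The neighbor–root marginal
`μ̄^{1,o} (a, b) = (1/β) ∑_m μ (b, m) · (multiplicity of a in m)`. -/
def nbrRoot (μ : T1 𝒳 → ℝ) (a b : 𝒳) : ℝ :=
  (1 / meanDeg μ) * ∑' m : Multiset 𝒳, μ (b, m) * (m.count a : ℝ)

/-- First marginal `μ̄¹` of `μ̄^{1,o}`. -/
def marg1 (μ : T1 𝒳 → ℝ) (a : 𝒳) : ℝ := ∑ b : 𝒳, nbrRoot μ a b

/-- Second marginal `μ̄ᵒ` of `μ̄^{1,o}`. -/
def margO (μ : T1 𝒳 → ℝ) (b : 𝒳) : ℝ := ∑ a : 𝒳, nbrRoot μ a b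

/-- Conditional law `μ̄^{1|o} (a | b) = μ̄^{1,o}(a,b)/μ̄ᵒ(b)` (and `0` if `μ̄ᵒ(b) = 0`). -/
def condNbr (μ : T1 𝒳 → ℝ) (a b : 𝒳) : ℝ :=
  if 0 < margO μ b then nbrRoot μ a b / margO μ b else 0

/-- `μ̌ (x, m) = η₁ (x, m) · ∏_{a ∈ m} μ̄¹ a / ν a` (product with multiplicity; a ratio
with zero denominator is `0`); here `η̄₁¹ = ν`. -/
def muCheck (ν : 𝒳 → ℝ) (Q : ℕ → ℝ) (μ : T1 𝒳 → ℝ) (τ : T1 𝒳) : ℝ :=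
  eta1 ν Q τ * (τ.2.map fun a => marg1 μ a / ν a).prod

/-- `μ̂ (x, m) = η₁ (x, m) · ∏_{a ∈ m} μ̄^{1|o}(a|x) / ν a` (product with multiplicity; a
ratio with zero denominator is `0`); here `η̄₁^{1|o}(a|b) = ν a`. -/
def muHat (ν : 𝒳 → ℝ) (Q : ℕ → ℝ) (μ : T1 𝒳 → ℝ) (τ : T1 𝒳) : ℝ :=
  eta1 ν Q τ * (τ.2.map fun a => condNbr μ a τ.1 / ν a).prod

end Defs

/-- Relative entropy `H(p ‖ q) = ∑ₛ p s * log (p s / q s)` of probability mass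
functions, with value `∞` when `p` is not absolutely continuous with respect to `q`
(or the defining series diverges); `0·log 0 = 0` is automatic since `Real.log 0 = 0`. -/
def relEnt {S : Type*} (p q : S → ℝ) : ℝ≥0∞ :=
  if (∀ s, q s = 0 → p s = 0) ∧ Summable (fun s => p s * Real.log (p s / q s)) then
    ENNReal.ofReal (∑' s, p s * Real.log (p s / q s))
  else ⊤

/-- Law of the root degree under `μ`: `degLaw μ n = μ {τ : deg τ = n}`. -/
def degLaw {𝒳 : Type} [Fintype 𝒳] [DecidableEq 𝒳] (μ : T1 𝒳 → ℝ) (n : ℕ) : ℝ :=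
  ∑' τ : T1 𝒳, if deg τ = n then μ τ else 0

/-- The rate function `𝕴(μ) = (1/2)(H(μ ‖ μ̌) + H(μ ‖ μ̂))` if `μ ≪ η₁^α`, the law of
the root degree under `μ` is `α`, and `μ̄^{1,o}` is symmetric; `𝕴(μ) = ∞` otherwise. -/
def rate {𝒳 : Type} [Fintype 𝒳] [DecidableEq 𝒳] (ν : 𝒳 → ℝ) (α : ℕ → ℝ)
    (μ : T1 𝒳 → ℝ) : ℝ≥0∞ :=
  if (∀ τ, eta1 ν α τ = 0 → μ τ = 0) ∧ (∀ n, degLaw μ n = α n) ∧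
      (∀ a b, nbrRoot μ a b = nbrRoot μ b a) then
    (relEnt μ (muCheck ν α μ) + relEnt μ (muHat ν α μ)) / 2
  else ⊤

/-! Write `γ` for the tilted law of the root degree and mark. Replacing `α ⊗ ν` by `γ` inside `μ̌`
and `μ̂` changes each relative entropy by the `μ`-mean of `log (γ / (α ⊗ ν))`, evaluated at the
root; this mean is `H(γ ‖ α ⊗ ν) + λ (E_μ[deg · h(root)] - c)`. Symmetry of the neighbor–root
marginal turns `E_μ[deg · h(root)]` into `E_μ[f] ≥ c`. Hence `𝕴(μ)` is `H(γ ‖ α ⊗ ν)` plus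
nonnegative terms, among them half the relative entropy of `μ` with respect to the law with root
law `γ` and independent neighbors of law `μ̄¹`. If that one vanishes, then `μ` has root law `γ`,
symmetry forces `μ̄¹ = ψ_γ`, and `μ = μ*`. -/

section RelativeEntropy

open InformationTheory (klFun klFun_nonneg klFun_eq_zero_iff)

variable {S : Type*} {F : Finset S} {p q r : S → ℝ}

/-- The real-valued relative entropy sum of `p` with respect to `q` over a finite set `F`, which
represents `relEnt p q` when `p` is supported in `F` and absolutely continuous. -/
def relEntSum (F : Finset S) (p q : S → ℝ) : ℝ := ∑ s ∈ F, p s * Real.log (p s / q s)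

lemma relEnt_eq_ofReal_relEntSum (hF : ∀ s ∉ F, p s = 0) (hac : ∀ s, q s = 0 → p s = 0) :
    relEnt p q = ENNReal.ofReal (relEntSum F p q) := by
  have hsum : HasSum (fun s => p s * Real.log (p s / q s)) (relEntSum F p q) :=
    hasSum_sum_of_ne_finset_zero fun s hs => by rw [hF s hs, zero_mul]
  rw [relEnt, if_pos ⟨hac, hsum.summable⟩, hsum.tsum_eq]

lemma relEntSum_self (F : Finset S) (p : S → ℝ) : relEntSum F p p = 0 :=
  Finset.sum_eq_zero fun s _ => by
    by_cases hs : p s = 0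
    · rw [hs, zero_mul]
    · rw [div_self hs, Real.log_one, mul_zero]

lemma relEntSum_eq_add (hq : ∀ s ∈ F, p s ≠ 0 → q s ≠ 0) (hr : ∀ s ∈ F, p s ≠ 0 → r s ≠ 0) :
    relEntSum F p q = relEntSum F p r + ∑ s ∈ F, p s * Real.log (r s / q s) := by
  rw [relEntSum, relEntSum, ← Finset.sum_add_distrib]
  refine Finset.sum_congr rfl fun s hs => ?_
  by_cases hp : p s = 0
  · simp only [hp, zero_mul, add_zero]
  · rw [Real.log_div hp (hq s hs hp), Real.log_div hp (hr s hs hp),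
      Real.log_div (hr s hs hp) (hq s hs hp)]
    ring

lemma sum_mul_klFun_div (hac : ∀ s ∈ F, q s = 0 → p s = 0) :
    ∑ s ∈ F, q s * klFun (p s / q s) = relEntSum F p q + ∑ s ∈ F, q s - ∑ s ∈ F, p s := by
  rw [relEntSum, ← Finset.sum_add_distrib, ← Finset.sum_sub_distrib]
  refine Finset.sum_congr rfl fun s hs => ?_
  by_cases hq : q s = 0
  · simp only [hq, hac s hs hq, zero_mul, add_zero, sub_zero]
  · rw [klFun]
    field_simp

lemma relEntSum_nonneg (hp : ∀ s ∈ F, 0 ≤ p s) (hq : ∀ s ∈ F, 0 ≤ q s)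
    (hac : ∀ s ∈ F, q s = 0 → p s = 0) (hle : ∑ s ∈ F, q s ≤ ∑ s ∈ F, p s) :
    0 ≤ relEntSum F p q := by
  have hkl : 0 ≤ ∑ s ∈ F, q s * klFun (p s / q s) := Finset.sum_nonneg fun s hs =>
    mul_nonneg (hq s hs) (klFun_nonneg (div_nonneg (hp s hs) (hq s hs)))
  linarith [sum_mul_klFun_div hac]

lemma eq_of_relEntSum_nonpos (hp : ∀ s ∈ F, 0 ≤ p s) (hq : ∀ s ∈ F, 0 ≤ q s)
    (hac : ∀ s ∈ F, q s = 0 → p s = 0) (hle : ∑ s ∈ F, q s ≤ ∑ s ∈ F, p s)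
    (hpq : relEntSum F p q ≤ 0) : ∀ s ∈ F, p s = q s := by
  have hterm : ∀ s ∈ F, 0 ≤ q s * klFun (p s / q s) := fun s hs =>
    mul_nonneg (hq s hs) (klFun_nonneg (div_nonneg (hp s hs) (hq s hs)))
  have hzero : ∑ s ∈ F, q s * klFun (p s / q s) = 0 :=
    le_antisymm (by linarith [sum_mul_klFun_div hac]) (Finset.sum_nonneg hterm)
  intro s hs
  rcases mul_eq_zero.1 ((Finset.sum_eq_zero_iff_of_nonneg hterm).1 hzero s hs) with hqs | hkl
  · rw [hqs, hac s hs hqs]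
  · exact eq_of_div_eq_one ((klFun_eq_zero_iff (div_nonneg (hp s hs) (hq s hs))).1 hkl)

end RelativeEntropy

section Multisets

variable {𝒳 : Type} [DecidableEq 𝒳]

lemma ordCoeff_pos (m : Multiset 𝒳) : 0 < ordCoeff m := by
  unfold ordCoeff
  positivity

lemma ordCoeff_eq_countPerms (m : Multiset 𝒳) : ordCoeff m = m.countPerms := by
  have hperms : m.countPerms = Nat.multinomial m.toFinset m.count := by
    rw [Multiset.countPerms, Finsupp.multinomial_eq, Multiset.toFinsupp_support]
    rfl
  have hspec := Nat.multinomial_spec m.toFinset m.count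
  rw [Multiset.toFinset_sum_count_eq, ← hperms] at hspec
  rw [ordCoeff, div_eq_iff (by positivity), mul_comm, ← hspec]
  push_cast
  rfl

variable [Fintype 𝒳]

lemma sum_map_eq_sum_count_mul (m : Multiset 𝒳) (h : 𝒳 → ℝ) :
    (m.map h).sum = ∑ a, (m.count a : ℝ) * h a := by
  rw [Finset.sum_multiset_map_count]
  simp only [nsmul_eq_mul]
  refine Finset.sum_subset (Finset.subset_univ _) fun a _ ha => ?_
  rw [Multiset.count_eq_zero_of_notMem (mt Multiset.mem_toFinset.2 ha), Nat.cast_zero, zero_mul]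

variable (𝒳) in
/-- The finite set of multisets of cardinality `n`. -/
def multisetsOfCard (n : ℕ) : Finset (Multiset 𝒳) :=
  (Finset.univ : Finset (Sym 𝒳 n)).map ⟨Sym.toMultiset, Sym.coe_injective⟩

lemma mem_multisetsOfCard {n : ℕ} {m : Multiset 𝒳} : m ∈ multisetsOfCard 𝒳 n ↔ m.card = n := by
  simp only [multisetsOfCard, Finset.mem_map, Finset.mem_univ, true_and]
  exact ⟨fun ⟨k, hk⟩ => hk ▸ k.2, fun hm => ⟨⟨m, hm⟩, rfl⟩⟩

variable (𝒳) in
/-- The finite set of multisets of cardinality at most `M`. -/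
def multisetsUpTo (M : ℕ) : Finset (Multiset 𝒳) :=
  (Finset.range (M + 1)).biUnion (multisetsOfCard 𝒳)

lemma mem_multisetsUpTo {M : ℕ} {m : Multiset 𝒳} : m ∈ multisetsUpTo 𝒳 M ↔ m.card ≤ M := by
  simp [multisetsUpTo, mem_multisetsOfCard]

lemma sum_multisetsUpTo (M : ℕ) (g : Multiset 𝒳 → ℝ) :
    ∑ m ∈ multisetsUpTo 𝒳 M, g m
      = ∑ n ∈ Finset.range (M + 1), ∑ m ∈ multisetsOfCard 𝒳 n, g m := by
  refine Finset.sum_biUnion fun i _ j _ hij => Finset.disjoint_left.2 fun m hi hj => hij ?_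
  rw [← mem_multisetsOfCard.1 hi, mem_multisetsOfCard.1 hj]

lemma sum_ordCoeff_mul_prod (p : 𝒳 → ℝ) (n : ℕ) :
    ∑ m ∈ multisetsOfCard 𝒳 n, ordCoeff m * (m.map p).prod = (∑ a, p a) ^ n := by
  rw [Finset.sum_pow, Finset.sym_univ, multisetsOfCard, Finset.sum_map]
  exact Finset.sum_congr rfl fun k _ => by rw [ordCoeff_eq_countPerms]; rfl

-- Differentiate the multinomial theorem at `t = 1` after replacing `p a` by `t * p a`.
lemma sum_ordCoeff_mul_prod_mul_count (p : 𝒳 → ℝ) (n : ℕ) (a : 𝒳) :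
    ∑ m ∈ multisetsOfCard 𝒳 n, ordCoeff m * (m.map p).prod * m.count a
      = n * (∑ b, p b) ^ (n - 1) * p a := by
  have hmarked : ∀ t : ℝ,
      ∑ m ∈ multisetsOfCard 𝒳 n, ordCoeff m * (m.map p).prod * t ^ m.count a
        = ((t - 1) * p a + ∑ b, p b) ^ n := by
    intro t
    have hsum : ∑ b, (if b = a then t else 1) * p b = (t - 1) * p a + ∑ b, p b := by
      simp only [ite_mul, one_mul, Finset.sum_ite, Finset.filter_eq', Finset.mem_univ, if_true,
        Finset.sum_singleton, Finset.filter_ne']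
      rw [← Finset.add_sum_erase _ _ (Finset.mem_univ a)]
      ring
    rw [← hsum, ← sum_ordCoeff_mul_prod]
    refine Finset.sum_congr rfl fun m _ => ?_
    rw [Multiset.prod_map_mul, Multiset.prod_map_eq_pow_single a fun b hb _ => if_neg hb,
      if_pos rfl]
    ring
  have hleft : HasDerivAt
      (fun t : ℝ => ∑ m ∈ multisetsOfCard 𝒳 n, ordCoeff m * (m.map p).prod * t ^ m.count a)
      (∑ m ∈ multisetsOfCard 𝒳 n, ordCoeff m * (m.map p).prod * m.count a) 1 :=
    HasDerivAt.fun_sum fun m _ => by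
      simpa using (hasDerivAt_pow (m.count a) (1 : ℝ)).const_mul (ordCoeff m * (m.map p).prod)
  have hright : HasDerivAt (fun t : ℝ => ((t - 1) * p a + ∑ b, p b) ^ n)
      (n * (∑ b, p b) ^ (n - 1) * p a) 1 := by
    simpa using ((((hasDerivAt_id (1 : ℝ)).sub_const 1).mul_const (p a)).add_const
      (∑ b, p b)).fun_pow n
  exact hleft.unique (funext hmarked ▸ hright)

end Multisets

section Trees

variable {𝒳 : Type} [Fintype 𝒳] [DecidableEq 𝒳]

variable (𝒳) in
/-- The finite set of depth-one trees whose root has degree at most `M`. -/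
def treesUpTo (M : ℕ) : Finset (T1 𝒳) := Finset.univ ×ˢ multisetsUpTo 𝒳 M

lemma mem_treesUpTo {M : ℕ} {τ : T1 𝒳} : τ ∈ treesUpTo 𝒳 M ↔ τ.2.card ≤ M := by
  simp [treesUpTo, mem_multisetsUpTo]

lemma hasSum_treesUpTo {M : ℕ} {g : T1 𝒳 → ℝ} (hg : ∀ τ : T1 𝒳, M < τ.2.card → g τ = 0) :
    HasSum g (∑ τ ∈ treesUpTo 𝒳 M, g τ) :=
  hasSum_sum_of_ne_finset_zero fun τ hτ => hg τ (not_le.1 (mt mem_treesUpTo.2 hτ))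

/-- The joint law under `μ` of the degree `n` and the mark `x` of the root. -/
def rootDegLaw (μ : T1 𝒳 → ℝ) (n : ℕ) (x : 𝒳) : ℝ := ∑ m ∈ multisetsOfCard 𝒳 n, μ (x, m)

lemma sum_multisetsUpTo_mul_card (M : ℕ) (μ : T1 𝒳 → ℝ) (x : 𝒳) (g : ℕ → ℝ) :
    ∑ m ∈ multisetsUpTo 𝒳 M, μ (x, m) * g m.card
      = ∑ n ∈ Finset.range (M + 1), rootDegLaw μ n x * g n := by
  rw [sum_multisetsUpTo]
  refine Finset.sum_congr rfl fun n _ => ?_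
  rw [rootDegLaw, Finset.sum_mul]
  exact Finset.sum_congr rfl fun m hm => by rw [mem_multisetsOfCard.1 hm]

lemma sum_treesUpTo_mul_deg_root (M : ℕ) (μ : T1 𝒳 → ℝ) (g : ℕ → 𝒳 → ℝ) :
    ∑ τ ∈ treesUpTo 𝒳 M, μ τ * g τ.2.card τ.1
      = ∑ n ∈ Finset.range (M + 1), ∑ x, rootDegLaw μ n x * g n x := by
  rw [treesUpTo, Finset.sum_product, Finset.sum_comm (s := Finset.range (M + 1))]
  exact Finset.sum_congr rfl fun x _ => sum_multisetsUpTo_mul_card M μ x fun n => g n x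

lemma sum_treesUpTo (M : ℕ) (μ : T1 𝒳 → ℝ) :
    ∑ τ ∈ treesUpTo 𝒳 M, μ τ = ∑ n ∈ Finset.range (M + 1), ∑ x, rootDegLaw μ n x := by
  simpa only [mul_one] using sum_treesUpTo_mul_deg_root M μ fun _ _ => 1

lemma degLaw_eq_sum_rootDegLaw (μ : T1 𝒳 → ℝ) (n : ℕ) :
    degLaw μ n = ∑ x, rootDegLaw μ n x := by
  simp only [degLaw, rootDegLaw, deg]
  rw [tsum_eq_sum (s := Finset.univ ×ˢ multisetsOfCard 𝒳 n), Finset.sum_product]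
  · refine Finset.sum_congr rfl fun x _ => Finset.sum_congr rfl fun m hm => ?_
    exact if_pos (mem_multisetsOfCard.1 hm)
  · intro τ hτ
    refine if_neg fun hn => hτ ?_
    exact Finset.mem_product.2 ⟨Finset.mem_univ _, mem_multisetsOfCard.2 hn⟩

end Trees

section SizeBias

variable {𝒳 : Type*} [Fintype 𝒳]

/-- The mean degree `∑ n, n * w n` of a weight `w` on pairs of a degree and a mark, truncated
at degree `M`. -/
def meanDegree (M : ℕ) (w : ℕ → 𝒳 → ℝ) : ℝ :=
  ∑ n ∈ Finset.range (M + 1), ∑ x, (n : ℝ) * w n x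

/-- The law of the mark under the weight `w` biased by the degree; for `w = γ` this is `ψ_γ`. -/
def sizeBiased (M : ℕ) (w : ℕ → 𝒳 → ℝ) (x : 𝒳) : ℝ :=
  (∑ n ∈ Finset.range (M + 1), (n : ℝ) * w n x) / meanDegree M w

/-- The degree-weighted mean of `h` under `w`; for `w = γ` this is the level `c`. -/
def degreeWeightedMean (M : ℕ) (h : 𝒳 → ℝ) (w : ℕ → 𝒳 → ℝ) : ℝ :=
  ∑ n ∈ Finset.range (M + 1), ∑ x, (n : ℝ) * h x * w n x

variable {M : ℕ} {w : ℕ → 𝒳 → ℝ}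

lemma sum_mul_sizeBiased (hw : meanDegree M w ≠ 0) (h : 𝒳 → ℝ) :
    meanDegree M w * ∑ x, sizeBiased M w x * h x = degreeWeightedMean M h w := by
  rw [degreeWeightedMean, Finset.sum_comm, Finset.mul_sum]
  refine Finset.sum_congr rfl fun x _ => ?_
  rw [← mul_assoc, sizeBiased, mul_div_cancel₀ _ hw, Finset.sum_mul]
  exact Finset.sum_congr rfl fun n _ => mul_right_comm _ _ _

lemma sum_sizeBiased (hw : meanDegree M w ≠ 0) : ∑ x, sizeBiased M w x = 1 := by
  simp only [sizeBiased, ← Finset.sum_div]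
  rw [Finset.sum_comm, ← meanDegree, div_self hw]

lemma meanDegree_eq {α : ℕ → ℝ} (hw : ∀ n, ∑ x, w n x = α n) :
    meanDegree M w = ∑ n ∈ Finset.range (M + 1), (n : ℝ) * α n :=
  Finset.sum_congr rfl fun n _ => by rw [← hw, Finset.mul_sum]

lemma sizeBiased_pos (hM : 0 < meanDegree M w) (hw : ∀ n x, 0 ≤ w n x)
    (hpos : ∀ n x y, 0 < w n x → 0 < w n y) (x : 𝒳) : 0 < sizeBiased M w x := by
  have hterm : ∀ (n : ℕ) (y : 𝒳), 0 ≤ (n : ℝ) * w n y := fun n y =>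
    mul_nonneg n.cast_nonneg (hw n y)
  obtain ⟨n, hn, hne⟩ := Finset.exists_ne_zero_of_sum_ne_zero hM.ne'
  obtain ⟨y, -, hy⟩ := Finset.exists_ne_zero_of_sum_ne_zero hne
  have hwx : 0 < w n x :=
    hpos n y x ((hw n y).lt_of_ne' (right_ne_zero_of_mul hy))
  have hn0 : (0 : ℝ) < n := n.cast_nonneg.lt_of_ne' (left_ne_zero_of_mul hy)
  exact div_pos (Finset.sum_pos' (fun k _ => hterm k x) ⟨n, hn, mul_pos hn0 hwx⟩) hM

end SizeBias

section Marginals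

variable {𝒳 : Type} [DecidableEq 𝒳] {M : ℕ} {μ : T1 𝒳 → ℝ}

lemma nbrRoot_nonneg (hμ : ∀ τ, 0 ≤ μ τ) (a b : 𝒳) : 0 ≤ nbrRoot μ a b :=
  mul_nonneg (one_div_nonneg.2 (tsum_nonneg fun τ => mul_nonneg (hμ τ) (Nat.cast_nonneg _)))
    (tsum_nonneg fun m => mul_nonneg (hμ (b, m)) (Nat.cast_nonneg _))

variable [Fintype 𝒳]

lemma meanDeg_eq_meanDegree (hM : ∀ τ : T1 𝒳, M < τ.2.card → μ τ = 0) :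
    meanDeg μ = meanDegree M (rootDegLaw μ) := by
  have hsum := hasSum_treesUpTo (g := fun τ => μ τ * (deg τ : ℝ))
    fun τ hτ => by rw [hM τ hτ, zero_mul]
  rw [meanDeg, hsum.tsum_eq]
  refine (sum_treesUpTo_mul_deg_root M μ fun n _ => (n : ℝ)).trans ?_
  simp only [meanDegree, mul_comm]

lemma nbrRoot_eq_sum_div (hM : ∀ τ : T1 𝒳, M < τ.2.card → μ τ = 0) (a b : 𝒳) :
    nbrRoot μ a b = (∑ m ∈ multisetsUpTo 𝒳 M, μ (b, m) * m.count a) / meanDeg μ := by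
  rw [nbrRoot, one_div_mul_eq_div, tsum_eq_sum fun m hm => ?_]
  rw [hM (b, m) (not_le.1 (mt mem_multisetsUpTo.2 hm)), zero_mul]

lemma margO_eq_sizeBiased (hM : ∀ τ : T1 𝒳, M < τ.2.card → μ τ = 0) :
    margO μ = sizeBiased M (rootDegLaw μ) := by
  funext b
  simp only [margO, nbrRoot_eq_sum_div hM, ← Finset.sum_div]
  rw [Finset.sum_comm, sizeBiased, ← meanDeg_eq_meanDegree hM]
  congr 1
  have hcount : ∀ m : Multiset 𝒳, ∑ a, (m.count a : ℝ) = m.card := fun m => by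
    rw [← Nat.cast_sum, Multiset.sum_count_eq_card fun a _ => Finset.mem_univ a]
  simp only [← Finset.mul_sum, hcount]
  rw [sum_multisetsUpTo_mul_card M μ b fun n => (n : ℝ)]
  exact Finset.sum_congr rfl fun n _ => mul_comm _ _

lemma sum_mul_sum_map_eq_meanDeg_mul (hM : ∀ τ : T1 𝒳, M < τ.2.card → μ τ = 0) (hβ : meanDeg μ ≠ 0)
    (h : 𝒳 → ℝ) :
    ∑ τ ∈ treesUpTo 𝒳 M, μ τ * (τ.2.map h).sum = meanDeg μ * ∑ a, marg1 μ a * h a := by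
  calc ∑ τ ∈ treesUpTo 𝒳 M, μ τ * (τ.2.map h).sum
      = ∑ b, ∑ a, (∑ m ∈ multisetsUpTo 𝒳 M, μ (b, m) * m.count a) * h a := by
        rw [treesUpTo, Finset.sum_product]
        refine Finset.sum_congr rfl fun b _ => ?_
        simp only [Finset.sum_mul, sum_map_eq_sum_count_mul, Finset.mul_sum, mul_assoc]
        exact Finset.sum_comm
    _ = ∑ a, ∑ b, meanDeg μ * nbrRoot μ a b * h a := by
        simp only [nbrRoot_eq_sum_div hM, mul_div_cancel₀ _ hβ]
        exact Finset.sum_comm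
    _ = meanDeg μ * ∑ a, marg1 μ a * h a := by
        simp only [marg1, Finset.mul_sum, Finset.sum_mul, mul_assoc]

lemma marg1_eq_margO (hsymm : ∀ a b, nbrRoot μ a b = nbrRoot μ b a) : marg1 μ = margO μ :=
  funext fun a => Finset.sum_congr rfl fun b _ => hsymm a b

lemma hasSum_mul_sum_map (hM : ∀ τ : T1 𝒳, M < τ.2.card → μ τ = 0) (hβ : meanDeg μ ≠ 0)
    (hsymm : ∀ a b, nbrRoot μ a b = nbrRoot μ b a) (h : 𝒳 → ℝ) :
    HasSum (fun τ : T1 𝒳 => μ τ * (τ.2.map h).sum)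
      (degreeWeightedMean M h (rootDegLaw μ)) := by
  have hβ' : meanDegree M (rootDegLaw μ) ≠ 0 := meanDeg_eq_meanDegree hM ▸ hβ
  rw [← sum_mul_sizeBiased hβ', ← meanDeg_eq_meanDegree hM, ← margO_eq_sizeBiased hM,
    ← marg1_eq_margO hsymm, ← sum_mul_sum_map_eq_meanDeg_mul hM hβ]
  exact hasSum_treesUpTo fun τ hτ => by rw [hM τ hτ, zero_mul]

lemma nbrRoot_pos (hμ : ∀ τ, 0 ≤ μ τ) (hM : ∀ τ : T1 𝒳, M < τ.2.card → μ τ = 0)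
    (hβ : 0 < meanDeg μ) {τ : T1 𝒳} (hτ : μ τ ≠ 0) {a : 𝒳} (ha : a ∈ τ.2) :
    0 < nbrRoot μ a τ.1 := by
  rw [nbrRoot_eq_sum_div hM]
  refine div_pos (Finset.sum_pos' (fun m _ => mul_nonneg (hμ _) (Nat.cast_nonneg _))
    ⟨τ.2, ?_, ?_⟩) hβ
  · exact mem_multisetsUpTo.2 (not_lt.1 (mt (hM τ) hτ))
  · exact mul_pos ((hμ τ).lt_of_ne' hτ) (Nat.cast_pos.2 (Multiset.count_pos.2 ha))

/-- A sub-stochastic kernel `p x a` from root marks to neighbor marks that charges every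
neighbor mark occurring under `μ`; the neighbor laws of `μ̌` and `μ̂` are of this kind. -/
structure IsNeighborKernel (μ : T1 𝒳 → ℝ) (p : 𝒳 → 𝒳 → ℝ) : Prop where
  nonneg : ∀ x a, 0 ≤ p x a
  sum_le_one : ∀ x, ∑ a, p x a ≤ 1
  ne_zero : ∀ τ : T1 𝒳, μ τ ≠ 0 → ∀ a ∈ τ.2, p τ.1 a ≠ 0

lemma isNeighborKernel_marg1 (hμ : ∀ τ, 0 ≤ μ τ) (hM : ∀ τ : T1 𝒳, M < τ.2.card → μ τ = 0)
    (hβ : 0 < meanDeg μ) : IsNeighborKernel μ fun _ => marg1 μ where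
  nonneg _ a := Finset.sum_nonneg fun b _ => nbrRoot_nonneg hμ a b
  sum_le_one _ := by
    have hβ' : meanDegree M (rootDegLaw μ) ≠ 0 := meanDeg_eq_meanDegree hM ▸ hβ.ne'
    have hswap : ∑ a, marg1 μ a = ∑ b, margO μ b := Finset.sum_comm
    rw [hswap, margO_eq_sizeBiased hM, sum_sizeBiased hβ']
  ne_zero τ hτ a ha := (Finset.sum_pos' (fun b _ => nbrRoot_nonneg hμ a b)
    ⟨τ.1, Finset.mem_univ _, nbrRoot_pos hμ hM hβ hτ ha⟩).ne'

lemma isNeighborKernel_condNbr (hμ : ∀ τ, 0 ≤ μ τ) (hM : ∀ τ : T1 𝒳, M < τ.2.card → μ τ = 0)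
    (hβ : 0 < meanDeg μ) : IsNeighborKernel μ fun x a => condNbr μ a x where
  nonneg x a := by
    unfold condNbr
    split_ifs with hx
    · exact div_nonneg (nbrRoot_nonneg hμ a x) hx.le
    · exact le_rfl
  sum_le_one x := by
    unfold condNbr
    split_ifs with hx
    · rw [← Finset.sum_div]
      exact (div_self hx.ne').le
    · simp only [Finset.sum_const_zero, zero_le_one]
  ne_zero τ hτ a ha := by
    have hnbr := nbrRoot_pos hμ hM hβ hτ ha
    have hroot : 0 < margO μ τ.1 := Finset.sum_pos' (fun b _ => nbrRoot_nonneg hμ b τ.1)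
      ⟨a, Finset.mem_univ _, hnbr⟩
    rw [condNbr, if_pos hroot]
    exact (div_pos hnbr hroot).ne'

end Marginals

section BranchingLaw

variable {𝒳 : Type} [DecidableEq 𝒳]

/-- The law of the tree whose root has degree `n` and mark `x` with weight `w n x` and whose
neighbors are, given the root mark `x`, independent with mark law `p x`. -/
def branchingLaw (w : ℕ → 𝒳 → ℝ) (p : 𝒳 → 𝒳 → ℝ) (τ : T1 𝒳) : ℝ :=
  w τ.2.card τ.1 * ordCoeff τ.2 * (τ.2.map (p τ.1)).prod

variable {w v : ℕ → 𝒳 → ℝ} {p : 𝒳 → 𝒳 → ℝ}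

lemma branchingLaw_nonneg (hw : ∀ n x, 0 ≤ w n x) (hp : ∀ x a, 0 ≤ p x a) (τ : T1 𝒳) :
    0 ≤ branchingLaw w p τ :=
  mul_nonneg (mul_nonneg (hw _ _) (ordCoeff_pos _).le)
    (Multiset.prod_map_nonneg fun a _ => hp τ.1 a)

lemma branchingLaw_ne_zero {τ : T1 𝒳} (hw : w τ.2.card τ.1 ≠ 0) (hp : ∀ a ∈ τ.2, p τ.1 a ≠ 0) :
    branchingLaw w p τ ≠ 0 := by
  refine mul_ne_zero (mul_ne_zero hw (ordCoeff_pos _).ne') fun hprod => ?_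
  obtain ⟨a, ha, hzero⟩ := Multiset.mem_map.1 (Multiset.prod_eq_zero_iff.1 hprod)
  exact hp a ha hzero

lemma branchingLaw_eq_zero {τ : T1 𝒳} (hw : w τ.2.card τ.1 = 0) : branchingLaw w p τ = 0 := by
  rw [branchingLaw, hw, zero_mul, zero_mul]

lemma branchingLaw_div_branchingLaw {τ : T1 𝒳} (hp : ∀ a ∈ τ.2, p τ.1 a ≠ 0) :
    branchingLaw w p τ / branchingLaw v p τ = w τ.2.card τ.1 / v τ.2.card τ.1 := by
  have hne : branchingLaw (fun _ _ => 1) p τ ≠ 0 := branchingLaw_ne_zero one_ne_zero hp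
  rw [branchingLaw, one_mul] at hne
  rw [branchingLaw, branchingLaw, mul_assoc, mul_assoc, mul_div_mul_right _ _ hne]

variable [Fintype 𝒳]

lemma rootDegLaw_branchingLaw (w : ℕ → 𝒳 → ℝ) (p : 𝒳 → 𝒳 → ℝ) (n : ℕ) (x : 𝒳) :
    rootDegLaw (branchingLaw w p) n x = w n x * (∑ a, p x a) ^ n := by
  rw [rootDegLaw, ← sum_ordCoeff_mul_prod, Finset.mul_sum]
  refine Finset.sum_congr rfl fun m hm => ?_
  rw [branchingLaw, mem_multisetsOfCard.1 hm, mul_assoc]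

lemma rootDegLaw_branchingLaw_of_sum_eq_one (hp : ∀ x, ∑ a, p x a = 1) :
    rootDegLaw (branchingLaw w p) = w := by
  funext n x
  rw [rootDegLaw_branchingLaw, hp, one_pow, mul_one]

lemma sum_branchingLaw_le (M : ℕ) (hw : ∀ n x, 0 ≤ w n x) (hp : ∀ x a, 0 ≤ p x a)
    (hp1 : ∀ x, ∑ a, p x a ≤ 1) :
    ∑ τ ∈ treesUpTo 𝒳 M, branchingLaw w p τ ≤ ∑ n ∈ Finset.range (M + 1), ∑ x, w n x := by
  rw [sum_treesUpTo]
  refine Finset.sum_le_sum fun n _ => Finset.sum_le_sum fun x _ => ?_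
  rw [rootDegLaw_branchingLaw]
  exact mul_le_of_le_one_right (hw n x)
    (pow_le_one₀ (Finset.sum_nonneg fun a _ => hp x a) (hp1 x))

lemma nbrRoot_branchingLaw {M : ℕ} (hw : ∀ n x, M < n → w n x = 0)
    (hp : ∀ x, ∑ a, p x a = 1) (a b : 𝒳) :
    nbrRoot (branchingLaw w p) a b = sizeBiased M w b * p b a := by
  have hM : ∀ τ : T1 𝒳, M < τ.2.card → branchingLaw w p τ = 0 := fun τ hτ =>
    branchingLaw_eq_zero (hw _ _ hτ)
  rw [nbrRoot_eq_sum_div hM, meanDeg_eq_meanDegree hM, rootDegLaw_branchingLaw_of_sum_eq_one hp,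
    sizeBiased, div_mul_eq_mul_div, sum_multisetsUpTo, Finset.sum_mul]
  congr 1
  refine Finset.sum_congr rfl fun n _ => ?_
  calc ∑ m ∈ multisetsOfCard 𝒳 n, branchingLaw w p (b, m) * m.count a
      = ∑ m ∈ multisetsOfCard 𝒳 n,
          w n b * (ordCoeff m * (m.map (p b)).prod * m.count a) :=
        Finset.sum_congr rfl fun m hm => by
          simp only [branchingLaw, mem_multisetsOfCard.1 hm, mul_assoc]
    _ = n * w n b * p b a := by
        rw [← Finset.mul_sum, sum_ordCoeff_mul_prod_mul_count, hp, one_pow, mul_one]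
        ring

end BranchingLaw

section GibbsTilt

variable {𝒳 : Type*} [Fintype 𝒳]

/-- The partition function of the mark law `ν` tilted by `h` at a root of degree `n`. -/
def partitionFn (ν h : 𝒳 → ℝ) (lam : ℝ) (n : ℕ) : ℝ := ∑ y, ν y * Real.exp (lam * n * h y)

/-- The tilted law `γ` of the root degree and the root mark. -/
def gibbsTilt (ν : 𝒳 → ℝ) (α : ℕ → ℝ) (h : 𝒳 → ℝ) (lam : ℝ) (n : ℕ) (x : 𝒳) : ℝ :=
  α n * ν x * Real.exp (lam * n * h x) / partitionFn ν h lam n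

/-- The standing assumptions of the Gibbs setup: `ν` is a positive law of marks and `α` is a law
of degrees at most `M` with positive mean. -/
structure GibbsSetup (ν : 𝒳 → ℝ) (M : ℕ) (α : ℕ → ℝ) : Prop where
  mark_pos : ∀ x, 0 < ν x
  sum_mark : ∑ x, ν x = 1
  degree_nonneg : ∀ n, 0 ≤ α n
  degree_eq_zero : ∀ n, M < n → α n = 0
  sum_degree : ∑ n ∈ Finset.range (M + 1), α n = 1
  mean_pos : 0 < ∑ n ∈ Finset.range (M + 1), (n : ℝ) * α n

variable {ν : 𝒳 → ℝ} {α : ℕ → ℝ} {M : ℕ} (h : 𝒳 → ℝ) (lam : ℝ)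

lemma partitionFn_pos [Nonempty 𝒳] (hν : ∀ x, 0 < ν x) (n : ℕ) : 0 < partitionFn ν h lam n :=
  Finset.sum_pos (fun x _ => mul_pos (hν x) (Real.exp_pos _)) Finset.univ_nonempty

lemma gibbsTilt_eq_zero {n : ℕ} (hα : α n = 0) (x : 𝒳) : gibbsTilt ν α h lam n x = 0 := by
  rw [gibbsTilt, hα, zero_mul, zero_mul, zero_div]

lemma gibbsTilt_pos [Nonempty 𝒳] (hν : ∀ x, 0 < ν x) {n : ℕ} (hα : 0 < α n) (x : 𝒳) :
    0 < gibbsTilt ν α h lam n x :=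
  div_pos (mul_pos (mul_pos hα (hν x)) (Real.exp_pos _)) (partitionFn_pos h lam hν n)

lemma sum_gibbsTilt [Nonempty 𝒳] (hν : ∀ x, 0 < ν x) (n : ℕ) :
    ∑ x, gibbsTilt ν α h lam n x = α n := by
  simp only [gibbsTilt, ← Finset.sum_div, mul_assoc (α n), ← Finset.mul_sum]
  exact mul_div_cancel_right₀ _ (partitionFn_pos h lam hν n).ne'

lemma log_gibbsTilt_div [Nonempty 𝒳] (hν : ∀ x, 0 < ν x) {n : ℕ} (hα : α n ≠ 0) (x : 𝒳) :
    Real.log (gibbsTilt ν α h lam n x / (α n * ν x))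
      = lam * n * h x - Real.log (partitionFn ν h lam n) := by
  have hprod : α n * ν x ≠ 0 := mul_ne_zero hα (hν x).ne'
  rw [gibbsTilt, div_right_comm, mul_div_cancel_left₀ _ hprod,
    Real.log_div (Real.exp_ne_zero _) (partitionFn_pos h lam hν n).ne', Real.log_exp]

lemma sum_mul_log_gibbsTilt_div [Nonempty 𝒳] (hν : ∀ x, 0 < ν x) (M : ℕ) {w : ℕ → 𝒳 → ℝ}
    (hw : ∀ n, ∑ x, w n x = α n) (hw0 : ∀ n x, α n = 0 → w n x = 0) :
    ∑ n ∈ Finset.range (M + 1), ∑ x,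
        w n x * Real.log (gibbsTilt ν α h lam n x / (α n * ν x))
      = lam * degreeWeightedMean M h w
        - ∑ n ∈ Finset.range (M + 1), α n * Real.log (partitionFn ν h lam n) := by
  rw [degreeWeightedMean, Finset.mul_sum, ← Finset.sum_sub_distrib]
  refine Finset.sum_congr rfl fun n _ => ?_
  have hlog : α n * Real.log (partitionFn ν h lam n)
      = ∑ x, w n x * Real.log (partitionFn ν h lam n) := by rw [← Finset.sum_mul, hw]
  rw [hlog, Finset.mul_sum, ← Finset.sum_sub_distrib]
  refine Finset.sum_congr rfl fun x _ => ?_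
  by_cases hα : α n = 0
  · simp only [hw0 n x hα, zero_mul, mul_zero, sub_zero]
  · rw [log_gibbsTilt_div h lam hν hα]
    ring

/-- The real-valued entropy `H(γ ‖ α ⊗ ν)` of the tilted law. -/
def tiltEntropy (ν : 𝒳 → ℝ) (M : ℕ) (α : ℕ → ℝ) (h : 𝒳 → ℝ) (lam : ℝ) : ℝ :=
  relEntSum (Finset.range (M + 1) ×ˢ Finset.univ)
    (fun s : ℕ × 𝒳 => gibbsTilt ν α h lam s.1 s.2) (fun s => α s.1 * ν s.2)

namespace GibbsSetup

lemma sum_sum_degree_mul_mark (hS : GibbsSetup ν M α) :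
    ∑ n ∈ Finset.range (M + 1), ∑ x, α n * ν x = 1 := by
  simp only [← Finset.mul_sum, hS.sum_mark, mul_one, hS.sum_degree]

lemma degree_eq_zero_of_mul_mark (hS : GibbsSetup ν M α) {n : ℕ} {x : 𝒳}
    (hzero : α n * ν x = 0) : α n = 0 :=
  (mul_eq_zero.1 hzero).resolve_right (hS.mark_pos x).ne'

lemma relEnt_gibbsTilt (hS : GibbsSetup ν M α) :
    relEnt (fun s : ℕ × 𝒳 => gibbsTilt ν α h lam s.1 s.2) (fun s => α s.1 * ν s.2)
      = ENNReal.ofReal (tiltEntropy ν M α h lam) := by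
  refine relEnt_eq_ofReal_relEntSum (fun s hs => ?_) fun s hs =>
    gibbsTilt_eq_zero h lam (hS.degree_eq_zero_of_mul_mark hs) _
  have hlt : M < s.1 := by
    by_contra hle
    exact hs (Finset.mem_product.2
      ⟨Finset.mem_range.2 (Nat.lt_succ_of_le (not_lt.1 hle)), Finset.mem_univ _⟩)
  exact gibbsTilt_eq_zero h lam (hS.degree_eq_zero _ hlt) _

variable [Nonempty 𝒳]

lemma gibbsTilt_nonneg (hS : GibbsSetup ν M α) (n : ℕ) (x : 𝒳) : 0 ≤ gibbsTilt ν α h lam n x := by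
  rcases (hS.degree_nonneg n).eq_or_lt with hα | hα
  · exact (gibbsTilt_eq_zero h lam hα.symm x).ge
  · exact (gibbsTilt_pos h lam hS.mark_pos hα x).le

lemma sum_sum_gibbsTilt (hS : GibbsSetup ν M α) :
    ∑ n ∈ Finset.range (M + 1), ∑ x, gibbsTilt ν α h lam n x = 1 := by
  simp only [sum_gibbsTilt h lam hS.mark_pos, hS.sum_degree]

lemma tiltEntropy_nonneg (hS : GibbsSetup ν M α) : 0 ≤ tiltEntropy ν M α h lam := by
  refine relEntSum_nonneg (fun s _ => hS.gibbsTilt_nonneg h lam _ _)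
    (fun s _ => mul_nonneg (hS.degree_nonneg _) (hS.mark_pos _).le)
    (fun s _ hs => gibbsTilt_eq_zero h lam (hS.degree_eq_zero_of_mul_mark hs) _) ?_
  rw [Finset.sum_product, Finset.sum_product, hS.sum_sum_gibbsTilt, hS.sum_sum_degree_mul_mark]

lemma sum_mul_log_gibbsTilt_div_eq_tiltEntropy_add (hS : GibbsSetup ν M α) {w : ℕ → 𝒳 → ℝ}
    (hw : ∀ n, ∑ x, w n x = α n) (hw0 : ∀ n x, α n = 0 → w n x = 0) :
    ∑ n ∈ Finset.range (M + 1), ∑ x,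
        w n x * Real.log (gibbsTilt ν α h lam n x / (α n * ν x))
      = tiltEntropy ν M α h lam + lam * (degreeWeightedMean M h w
          - degreeWeightedMean M h (gibbsTilt ν α h lam)) := by
  have htilt := sum_mul_log_gibbsTilt_div h lam hS.mark_pos M
    (sum_gibbsTilt (α := α) h lam hS.mark_pos) fun n x hα => gibbsTilt_eq_zero h lam hα x
  rw [tiltEntropy, relEntSum, Finset.sum_product,
    sum_mul_log_gibbsTilt_div h lam hS.mark_pos M hw hw0, htilt]
  ring

lemma degree_eq_zero_of_gibbsTilt (hS : GibbsSetup ν M α) {n : ℕ} {x : 𝒳}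
    (hzero : gibbsTilt ν α h lam n x = 0) : α n = 0 := by
  by_contra hα
  exact (gibbsTilt_pos h lam hS.mark_pos ((hS.degree_nonneg n).lt_of_ne' hα) x).ne' hzero

lemma meanDegree_gibbsTilt_pos (hS : GibbsSetup ν M α) :
    0 < meanDegree M (gibbsTilt ν α h lam) := by
  rw [meanDegree_eq (sum_gibbsTilt h lam hS.mark_pos)]
  exact hS.mean_pos

lemma sizeBiased_gibbsTilt_pos (hS : GibbsSetup ν M α) (x : 𝒳) :
    0 < sizeBiased M (gibbsTilt ν α h lam) x :=
  sizeBiased_pos (hS.meanDegree_gibbsTilt_pos h lam) (hS.gibbsTilt_nonneg h lam)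
    (fun n _ y hpos => gibbsTilt_pos h lam hS.mark_pos
      ((hS.degree_nonneg n).lt_of_ne' fun hα => hpos.ne' (gibbsTilt_eq_zero h lam hα _)) y) x

lemma sum_sizeBiased_gibbsTilt (hS : GibbsSetup ν M α) :
    ∑ x, sizeBiased M (gibbsTilt ν α h lam) x = 1 :=
  sum_sizeBiased (hS.meanDegree_gibbsTilt_pos h lam).ne'

end GibbsSetup

end GibbsTilt

section RateFunction

variable {𝒳 : Type} [DecidableEq 𝒳] {ν : 𝒳 → ℝ}

lemma eta1_eq_branchingLaw (ν : 𝒳 → ℝ) (α : ℕ → ℝ) :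
    eta1 ν α = branchingLaw (fun n x => α n * ν x) fun _ => ν := by
  funext τ
  rw [eta1, branchingLaw, mul_comm (ν τ.1)]

lemma eta1_mul_prod_div (hν : ∀ x, 0 < ν x) (α : ℕ → ℝ) (p : 𝒳 → 𝒳 → ℝ) (τ : T1 𝒳) :
    eta1 ν α τ * (τ.2.map fun a => p τ.1 a / ν a).prod
      = branchingLaw (fun n x => α n * ν x) p τ := by
  have hprod : (τ.2.map ν).prod * (τ.2.map fun a => p τ.1 a / ν a).prod
      = (τ.2.map (p τ.1)).prod := by
    rw [← Multiset.prod_map_mul]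
    simp only [mul_div_cancel₀ _ (hν _).ne']
  rw [eta1, branchingLaw, ← hprod]
  ring

variable [Fintype 𝒳] {M : ℕ} {α : ℕ → ℝ} {μ : T1 𝒳 → ℝ}

/-- The nonnegative weights on trees for which `rate` is given by relative entropies: they are
dominated by `η₁^α`, have degree law `α` and a symmetric neighbor–root marginal. -/
structure IsAdmissible (ν : 𝒳 → ℝ) (α : ℕ → ℝ) (μ : T1 𝒳 → ℝ) : Prop where
  nonneg : ∀ τ, 0 ≤ μ τ
  ac : ∀ τ, eta1 ν α τ = 0 → μ τ = 0
  degLaw_eq : ∀ n, degLaw μ n = α n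
  nbrRoot_symm : ∀ a b, nbrRoot μ a b = nbrRoot μ b a

lemma isAdmissible_of_rate_ne_top (hμ : ∀ τ, 0 ≤ μ τ) (hrate : rate ν α μ ≠ ⊤) :
    IsAdmissible ν α μ := by
  unfold rate at hrate
  split_ifs at hrate with hadm
  · exact ⟨hμ, hadm.1, hadm.2.1, hadm.2.2⟩
  · exact absurd rfl hrate

lemma muCheck_eq_branchingLaw (hν : ∀ x, 0 < ν x) (α : ℕ → ℝ) (μ : T1 𝒳 → ℝ) :
    muCheck ν α μ = branchingLaw (fun n x => α n * ν x) fun _ => marg1 μ :=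
  funext fun τ => eta1_mul_prod_div hν α (fun _ => marg1 μ) τ

lemma muHat_eq_branchingLaw (hν : ∀ x, 0 < ν x) (α : ℕ → ℝ) (μ : T1 𝒳 → ℝ) :
    muHat ν α μ = branchingLaw (fun n x => α n * ν x) fun x a => condNbr μ a x :=
  funext fun τ => eta1_mul_prod_div hν α (fun x a => condNbr μ a x) τ

namespace IsAdmissible

lemma eq_zero_of_degree_eq_zero (hμ : IsAdmissible ν α μ) {τ : T1 𝒳} (hα : α τ.2.card = 0) :
    μ τ = 0 :=
  hμ.ac τ (by rw [eta1, hα, mul_zero, zero_mul, zero_mul])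

lemma sum_rootDegLaw (hμ : IsAdmissible ν α μ) (n : ℕ) : ∑ x, rootDegLaw μ n x = α n := by
  rw [← degLaw_eq_sum_rootDegLaw, hμ.degLaw_eq]

lemma rootDegLaw_eq_zero (hμ : IsAdmissible ν α μ) (n : ℕ) (x : 𝒳) (hα : α n = 0) :
    rootDegLaw μ n x = 0 :=
  Finset.sum_eq_zero fun m hm => hμ.eq_zero_of_degree_eq_zero (by
    rwa [mem_multisetsOfCard.1 hm])

lemma eq_zero_of_lt_card (hμ : IsAdmissible ν α μ) (hS : GibbsSetup ν M α) (τ : T1 𝒳)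
    (hτ : M < τ.2.card) : μ τ = 0 :=
  hμ.eq_zero_of_degree_eq_zero (hS.degree_eq_zero _ hτ)

lemma meanDeg_pos (hμ : IsAdmissible ν α μ) (hS : GibbsSetup ν M α) : 0 < meanDeg μ := by
  rw [meanDeg_eq_meanDegree (hμ.eq_zero_of_lt_card hS), meanDegree_eq hμ.sum_rootDegLaw]
  exact hS.mean_pos

lemma sum_treesUpTo_eq_one (hμ : IsAdmissible ν α μ) (hS : GibbsSetup ν M α) :
    ∑ τ ∈ treesUpTo 𝒳 M, μ τ = 1 := by
  simp only [sum_treesUpTo, hμ.sum_rootDegLaw, hS.sum_degree]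

lemma hasSum_one (hμ : IsAdmissible ν α μ) (hS : GibbsSetup ν M α) : HasSum μ 1 :=
  hμ.sum_treesUpTo_eq_one hS ▸ hasSum_treesUpTo (hμ.eq_zero_of_lt_card hS)

lemma hasSum_sum_map (hμ : IsAdmissible ν α μ) (hS : GibbsSetup ν M α) (h : 𝒳 → ℝ) :
    HasSum (fun τ : T1 𝒳 => μ τ * (τ.2.map h).sum) (degreeWeightedMean M h (rootDegLaw μ)) :=
  hasSum_mul_sum_map (hμ.eq_zero_of_lt_card hS) (hμ.meanDeg_pos hS).ne' hμ.nbrRoot_symm h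

lemma isNeighborKernel_marg1 (hμ : IsAdmissible ν α μ) (hS : GibbsSetup ν M α) :
    IsNeighborKernel μ fun _ => marg1 μ :=
  _root_.isNeighborKernel_marg1 hμ.nonneg (hμ.eq_zero_of_lt_card hS) (hμ.meanDeg_pos hS)

lemma isNeighborKernel_condNbr (hμ : IsAdmissible ν α μ) (hS : GibbsSetup ν M α) :
    IsNeighborKernel μ fun x a => condNbr μ a x :=
  _root_.isNeighborKernel_condNbr hμ.nonneg (hμ.eq_zero_of_lt_card hS) (hμ.meanDeg_pos hS)

lemma branchingLaw_ne_zero (hμ : IsAdmissible ν α μ) {w : ℕ → 𝒳 → ℝ} {p : 𝒳 → 𝒳 → ℝ}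
    (hw : ∀ n x, w n x = 0 → α n = 0) (hp : IsNeighborKernel μ p) {τ : T1 𝒳} (hτ : μ τ ≠ 0) :
    branchingLaw w p τ ≠ 0 :=
  _root_.branchingLaw_ne_zero
    (fun hzero => hτ (hμ.eq_zero_of_degree_eq_zero (hw _ _ hzero))) (hp.ne_zero τ hτ)

end IsAdmissible

end RateFunction

section Tilting

variable {𝒳 : Type} [Fintype 𝒳] [DecidableEq 𝒳] {ν : 𝒳 → ℝ} {M : ℕ} {α : ℕ → ℝ}
  {μ : T1 𝒳 → ℝ} {w : ℕ → 𝒳 → ℝ} {p : 𝒳 → 𝒳 → ℝ}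

namespace IsAdmissible

lemma sum_branchingLaw_le (hμ : IsAdmissible ν α μ) (hS : GibbsSetup ν M α)
    (hw : ∀ n x, 0 ≤ w n x) (hw1 : ∑ n ∈ Finset.range (M + 1), ∑ x, w n x = 1)
    (hp : IsNeighborKernel μ p) :
    ∑ τ ∈ treesUpTo 𝒳 M, branchingLaw w p τ ≤ ∑ τ ∈ treesUpTo 𝒳 M, μ τ := by
  rw [hμ.sum_treesUpTo_eq_one hS, ← hw1]
  exact _root_.sum_branchingLaw_le M hw hp.nonneg hp.sum_le_one

lemma eq_zero_of_branchingLaw_eq_zero (hμ : IsAdmissible ν α μ)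
    (hw : ∀ n x, w n x = 0 → α n = 0) (hp : IsNeighborKernel μ p) (τ : T1 𝒳)
    (hτ : branchingLaw w p τ = 0) : μ τ = 0 := by
  by_contra hne
  exact hμ.branchingLaw_ne_zero hw hp hne hτ

lemma relEntSum_branchingLaw_nonneg (hμ : IsAdmissible ν α μ) (hS : GibbsSetup ν M α)
    (hw : ∀ n x, 0 ≤ w n x) (hw0 : ∀ n x, w n x = 0 → α n = 0)
    (hw1 : ∑ n ∈ Finset.range (M + 1), ∑ x, w n x = 1) (hp : IsNeighborKernel μ p) :
    0 ≤ relEntSum (treesUpTo 𝒳 M) μ (branchingLaw w p) :=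
  relEntSum_nonneg (fun τ _ => hμ.nonneg τ) (fun τ _ => branchingLaw_nonneg hw hp.nonneg τ)
    (fun τ _ => hμ.eq_zero_of_branchingLaw_eq_zero hw0 hp τ) (hμ.sum_branchingLaw_le hS hw hw1 hp)

lemma relEnt_branchingLaw (hμ : IsAdmissible ν α μ) (hS : GibbsSetup ν M α)
    (hw0 : ∀ n x, w n x = 0 → α n = 0) (hp : IsNeighborKernel μ p) :
    relEnt μ (branchingLaw w p)
      = ENNReal.ofReal (relEntSum (treesUpTo 𝒳 M) μ (branchingLaw w p)) :=
  relEnt_eq_ofReal_relEntSum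
    (fun τ hτ => hμ.eq_zero_of_lt_card hS τ (not_le.1 (mt mem_treesUpTo.2 hτ)))
    (hμ.eq_zero_of_branchingLaw_eq_zero hw0 hp)

lemma rate_eq_ofReal (hμ : IsAdmissible ν α μ) (hS : GibbsSetup ν M α) :
    rate ν α μ = ENNReal.ofReal
      ((relEntSum (treesUpTo 𝒳 M) μ (branchingLaw (fun n x => α n * ν x) fun _ => marg1 μ)
        + relEntSum (treesUpTo 𝒳 M) μ
          (branchingLaw (fun n x => α n * ν x) fun x a => condNbr μ a x)) / 2) := by
  have hcheck := hμ.isNeighborKernel_marg1 hS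
  have hhat := hμ.isNeighborKernel_condNbr hS
  have hw (n : ℕ) (x : 𝒳) : 0 ≤ α n * ν x := mul_nonneg (hS.degree_nonneg n) (hS.mark_pos x).le
  have hw0 (n : ℕ) (x : 𝒳) : α n * ν x = 0 → α n = 0 := hS.degree_eq_zero_of_mul_mark
  have hw1 := hS.sum_sum_degree_mul_mark
  rw [rate, if_pos ⟨hμ.ac, hμ.degLaw_eq, hμ.nbrRoot_symm⟩, muCheck_eq_branchingLaw hS.mark_pos,
    muHat_eq_branchingLaw hS.mark_pos, hμ.relEnt_branchingLaw hS hw0 hcheck,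
    hμ.relEnt_branchingLaw hS hw0 hhat,
    ← ENNReal.ofReal_add (hμ.relEntSum_branchingLaw_nonneg hS hw hw0 hw1 hcheck)
      (hμ.relEntSum_branchingLaw_nonneg hS hw hw0 hw1 hhat),
    ENNReal.ofReal_div_of_pos two_pos, ENNReal.ofReal_ofNat]

variable [Nonempty 𝒳] (h : 𝒳 → ℝ) (lam : ℝ)

lemma relEntSum_branchingLaw_eq_add (hμ : IsAdmissible ν α μ) (hS : GibbsSetup ν M α)
    (hp : IsNeighborKernel μ p) :
    relEntSum (treesUpTo 𝒳 M) μ (branchingLaw (fun n x => α n * ν x) p)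
      = relEntSum (treesUpTo 𝒳 M) μ (branchingLaw (gibbsTilt ν α h lam) p)
        + (tiltEntropy ν M α h lam + lam * (degreeWeightedMean M h (rootDegLaw μ)
          - degreeWeightedMean M h (gibbsTilt ν α h lam))) := by
  rw [← hS.sum_mul_log_gibbsTilt_div_eq_tiltEntropy_add h lam hμ.sum_rootDegLaw
      hμ.rootDegLaw_eq_zero,
    ← sum_treesUpTo_mul_deg_root M μ fun n x => Real.log (gibbsTilt ν α h lam n x / (α n * ν x)),
    relEntSum_eq_add
      (fun τ _ => hμ.branchingLaw_ne_zero (fun _ _ => hS.degree_eq_zero_of_mul_mark) hp)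
      (fun τ _ => hμ.branchingLaw_ne_zero (fun _ _ => hS.degree_eq_zero_of_gibbsTilt h lam) hp)]
  congr 1
  refine Finset.sum_congr rfl fun τ _ => ?_
  by_cases hτ : μ τ = 0
  · rw [hτ, zero_mul, zero_mul]
  · rw [branchingLaw_div_branchingLaw (hp.ne_zero τ hτ)]

lemma rate_eq_ofReal_tiltEntropy_add (hμ : IsAdmissible ν α μ) (hS : GibbsSetup ν M α) :
    rate ν α μ = ENNReal.ofReal
      (tiltEntropy ν M α h lam + lam * (degreeWeightedMean M h (rootDegLaw μ)
          - degreeWeightedMean M h (gibbsTilt ν α h lam))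
        + (relEntSum (treesUpTo 𝒳 M) μ (branchingLaw (gibbsTilt ν α h lam) fun _ => marg1 μ)
          + relEntSum (treesUpTo 𝒳 M) μ
            (branchingLaw (gibbsTilt ν α h lam) fun x a => condNbr μ a x)) / 2) := by
  rw [hμ.rate_eq_ofReal hS,
    hμ.relEntSum_branchingLaw_eq_add h lam hS (hμ.isNeighborKernel_marg1 hS),
    hμ.relEntSum_branchingLaw_eq_add h lam hS (hμ.isNeighborKernel_condNbr hS)]
  congr 1
  ring

lemma relEntSum_gibbsTilt_nonneg (hμ : IsAdmissible ν α μ) (hS : GibbsSetup ν M α)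
    (hp : IsNeighborKernel μ p) :
    0 ≤ relEntSum (treesUpTo 𝒳 M) μ (branchingLaw (gibbsTilt ν α h lam) p) :=
  hμ.relEntSum_branchingLaw_nonneg hS (hS.gibbsTilt_nonneg h lam)
    (fun _ _ => hS.degree_eq_zero_of_gibbsTilt h lam) (hS.sum_sum_gibbsTilt h lam) hp

lemma eq_branchingLaw_of_relEntSum_nonpos (hμ : IsAdmissible ν α μ) (hS : GibbsSetup ν M α)
    (hp : IsNeighborKernel μ p)
    (hle : relEntSum (treesUpTo 𝒳 M) μ (branchingLaw (gibbsTilt ν α h lam) p) ≤ 0) :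
    μ = branchingLaw (gibbsTilt ν α h lam) p := by
  funext τ
  rcases le_or_gt τ.2.card M with hτ | hτ
  · exact eq_of_relEntSum_nonpos (fun τ _ => hμ.nonneg τ)
      (fun τ _ => branchingLaw_nonneg (hS.gibbsTilt_nonneg h lam) hp.nonneg τ)
      (fun τ _ => hμ.eq_zero_of_branchingLaw_eq_zero
        (fun _ _ => hS.degree_eq_zero_of_gibbsTilt h lam) hp τ)
      (hμ.sum_branchingLaw_le hS (hS.gibbsTilt_nonneg h lam) (hS.sum_sum_gibbsTilt h lam) hp)
      hle τ (mem_treesUpTo.2 hτ)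
  · rw [hμ.eq_zero_of_lt_card hS τ hτ,
      branchingLaw_eq_zero (gibbsTilt_eq_zero h lam (hS.degree_eq_zero _ hτ) _)]

end IsAdmissible

end Tilting

section Minimizer

variable {𝒳 : Type} [Fintype 𝒳] [DecidableEq 𝒳] {ν : 𝒳 → ℝ} {M : ℕ} {α : ℕ → ℝ}
  {μ : T1 𝒳 → ℝ} {h : 𝒳 → ℝ} {lam : ℝ}

/-- The minimizer `μ*`: the root is distributed according to `γ`, and its neighbors are
independent with mark law `ψ_γ`. -/
def gibbsMinimizer (ν : 𝒳 → ℝ) (M : ℕ) (α : ℕ → ℝ) (h : 𝒳 → ℝ) (lam : ℝ) : T1 𝒳 → ℝ :=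
  branchingLaw (gibbsTilt ν α h lam) fun _ => sizeBiased M (gibbsTilt ν α h lam)

namespace GibbsSetup

-- A fixed point `μ = branchingLaw γ (marg1 μ)` has root law `γ`, and symmetry then identifies the
-- neighbor law `marg1 μ` with the size-biased root law.
lemma eq_gibbsMinimizer_of_eq_branchingLaw (hS : GibbsSetup ν M α) (hμ : IsAdmissible ν α μ)
    (hfix : μ = branchingLaw (gibbsTilt ν α h lam) fun _ => marg1 μ) :
    μ = gibbsMinimizer ν M α h lam := by
  have hM := hμ.eq_zero_of_lt_card hS
  have hmean : meanDegree M (rootDegLaw μ) ≠ 0 :=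
    meanDeg_eq_meanDegree hM ▸ (hμ.meanDeg_pos hS).ne'
  have hmarg : marg1 μ = sizeBiased M (rootDegLaw μ) :=
    (marg1_eq_margO hμ.nbrRoot_symm).trans (margO_eq_sizeBiased hM)
  have hroot : rootDegLaw μ = gibbsTilt ν α h lam := by
    conv_lhs => rw [hfix]
    exact rootDegLaw_branchingLaw_of_sum_eq_one fun _ => by rw [hmarg, sum_sizeBiased hmean]
  rwa [hmarg, hroot] at hfix

variable [Nonempty 𝒳]

lemma rootDegLaw_gibbsMinimizer (hS : GibbsSetup ν M α) :
    rootDegLaw (gibbsMinimizer ν M α h lam) = gibbsTilt ν α h lam :=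
  rootDegLaw_branchingLaw_of_sum_eq_one fun _ => hS.sum_sizeBiased_gibbsTilt h lam

lemma nbrRoot_gibbsMinimizer (hS : GibbsSetup ν M α) (a b : 𝒳) :
    nbrRoot (gibbsMinimizer ν M α h lam) a b
      = sizeBiased M (gibbsTilt ν α h lam) b * sizeBiased M (gibbsTilt ν α h lam) a :=
  nbrRoot_branchingLaw (fun n x hn => gibbsTilt_eq_zero h lam (hS.degree_eq_zero n hn) x)
    (fun _ => hS.sum_sizeBiased_gibbsTilt h lam) a b

lemma marg1_gibbsMinimizer (hS : GibbsSetup ν M α) :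
    marg1 (gibbsMinimizer ν M α h lam) = sizeBiased M (gibbsTilt ν α h lam) := by
  funext a
  simp only [marg1, hS.nbrRoot_gibbsMinimizer, ← Finset.sum_mul, hS.sum_sizeBiased_gibbsTilt,
    one_mul]

lemma condNbr_gibbsMinimizer (hS : GibbsSetup ν M α) (a b : 𝒳) :
    condNbr (gibbsMinimizer ν M α h lam) a b = sizeBiased M (gibbsTilt ν α h lam) a := by
  have hroot : margO (gibbsMinimizer ν M α h lam) b = sizeBiased M (gibbsTilt ν α h lam) b := by
    simp only [margO, hS.nbrRoot_gibbsMinimizer, ← Finset.mul_sum, hS.sum_sizeBiased_gibbsTilt,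
      mul_one]
  have hpos := hS.sizeBiased_gibbsTilt_pos h lam b
  rw [condNbr, hroot, if_pos hpos, hS.nbrRoot_gibbsMinimizer, mul_div_cancel_left₀ _ hpos.ne']

lemma isAdmissible_gibbsMinimizer (hS : GibbsSetup ν M α) :
    IsAdmissible ν α (gibbsMinimizer ν M α h lam) where
  nonneg := branchingLaw_nonneg (hS.gibbsTilt_nonneg h lam)
    fun _ a => (hS.sizeBiased_gibbsTilt_pos h lam a).le
  ac τ hτ := by
    by_contra hne
    rw [eta1_eq_branchingLaw] at hτ
    refine branchingLaw_ne_zero (fun hzero => hne ?_) (fun a _ => (hS.mark_pos a).ne') hτ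
    exact branchingLaw_eq_zero (gibbsTilt_eq_zero h lam (hS.degree_eq_zero_of_mul_mark hzero) _)
  degLaw_eq n := by
    rw [degLaw_eq_sum_rootDegLaw, hS.rootDegLaw_gibbsMinimizer, sum_gibbsTilt h lam hS.mark_pos]
  nbrRoot_symm a b := by
    rw [hS.nbrRoot_gibbsMinimizer, hS.nbrRoot_gibbsMinimizer, mul_comm]

lemma rate_gibbsMinimizer (hS : GibbsSetup ν M α) :
    rate ν α (gibbsMinimizer ν M α h lam)
      = relEnt (fun s : ℕ × 𝒳 => gibbsTilt ν α h lam s.1 s.2) (fun s => α s.1 * ν s.2) := by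
  rw [hS.isAdmissible_gibbsMinimizer.rate_eq_ofReal_tiltEntropy_add h lam hS,
    hS.rootDegLaw_gibbsMinimizer, hS.marg1_gibbsMinimizer, hS.relEnt_gibbsTilt]
  simp only [hS.condNbr_gibbsMinimizer]
  rw [← gibbsMinimizer, relEntSum_self, sub_self, mul_zero, add_zero, add_zero, zero_div, add_zero]

theorem relEnt_gibbsTilt_le_rate (hS : GibbsSetup ν M α) (hlam : 0 ≤ lam) (hμ : ∀ τ, 0 ≤ μ τ)
    (hc : degreeWeightedMean M h (gibbsTilt ν α h lam) ≤ ∑' τ : T1 𝒳, μ τ * (τ.2.map h).sum) :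
    relEnt (fun s : ℕ × 𝒳 => gibbsTilt ν α h lam s.1 s.2) (fun s => α s.1 * ν s.2)
      ≤ rate ν α μ := by
  by_cases hrate : rate ν α μ = ⊤
  · exact hrate ▸ le_top
  have hadm := isAdmissible_of_rate_ne_top hμ hrate
  rw [(hadm.hasSum_sum_map hS h).tsum_eq] at hc
  rw [hS.relEnt_gibbsTilt, hadm.rate_eq_ofReal_tiltEntropy_add h lam hS]
  refine ENNReal.ofReal_le_ofReal ?_
  linarith [mul_nonneg hlam (sub_nonneg.2 hc),
    hadm.relEntSum_gibbsTilt_nonneg h lam hS (hadm.isNeighborKernel_marg1 hS),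
    hadm.relEntSum_gibbsTilt_nonneg h lam hS (hadm.isNeighborKernel_condNbr hS)]

theorem rate_eq_relEnt_gibbsTilt_iff (hS : GibbsSetup ν M α) (hlam : 0 ≤ lam)
    (hμ : ∀ τ, 0 ≤ μ τ)
    (hc : degreeWeightedMean M h (gibbsTilt ν α h lam) ≤ ∑' τ : T1 𝒳, μ τ * (τ.2.map h).sum) :
    rate ν α μ
        = relEnt (fun s : ℕ × 𝒳 => gibbsTilt ν α h lam s.1 s.2) (fun s => α s.1 * ν s.2)
      ↔ μ = gibbsMinimizer ν M α h lam := by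
  refine ⟨fun hrate => ?_, fun hmin => hmin ▸ hS.rate_gibbsMinimizer⟩
  rw [hS.relEnt_gibbsTilt] at hrate
  have hadm := isAdmissible_of_rate_ne_top hμ (hrate ▸ ENNReal.ofReal_ne_top)
  have hkernel := hadm.isNeighborKernel_marg1 hS
  refine hS.eq_gibbsMinimizer_of_eq_branchingLaw hadm
    (hadm.eq_branchingLaw_of_relEntSum_nonpos h lam hS hkernel ?_)
  rw [(hadm.hasSum_sum_map hS h).tsum_eq] at hc
  rw [hadm.rate_eq_ofReal_tiltEntropy_add h lam hS] at hrate
  have hle := (ENNReal.ofReal_le_ofReal_iff (hS.tiltEntropy_nonneg h lam)).1 hrate.le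
  linarith [mul_nonneg hlam (sub_nonneg.2 hc),
    hadm.relEntSum_gibbsTilt_nonneg h lam hS hkernel,
    hadm.relEntSum_gibbsTilt_nonneg h lam hS (hadm.isNeighborKernel_condNbr hS)]

end GibbsSetup

end Minimizer

/-- **Solution of the Gibbs conditioning variational problem (Proposition 4.1).**
In the Gibbs setup, suppose `(∑_n n·α n)·(∑_x ν x·h x) < c < κ·max_x h x`, let
`λ > 0` satisfy `∑_{n,x} n·h x·γ (n,x) = c` for the tilted law `γ`, and let
`ψ x = (1/κ) ∑_n n·γ n x` and
`μ* (x, m) = γ (card m) x · (card m)!/∏ₐ count a ! · ∏_{a ∈ m} ψ a`.  Then: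
(i) `μ*` is a pmf on `T1` with `∑_τ μ* τ · f τ = c`, where `f (x, m) = ∑_{a ∈ m} h a`;
(ii) `𝕴(μ*) = H(γ ‖ α ⊗ ν)`; and (iii) every pmf `μ` with `∑_τ μ τ · f τ ≥ c`
satisfies `𝕴(μ) ≥ H(γ ‖ α ⊗ ν)`, with equality iff `μ = μ*`. -/
theorem gibbs_conditioning_minimizer
    {𝒳 : Type} [Fintype 𝒳] [DecidableEq 𝒳] [Nonempty 𝒳]
    (ν : 𝒳 → ℝ) (hν0 : ∀ x, 0 < ν x) (hν1 : ∑ x, ν x = 1)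
    (M : ℕ) (α : ℕ → ℝ) (hα0 : ∀ n, 0 ≤ α n) (hαsupp : ∀ n, M < n → α n = 0)
    (hα1 : ∑ n ∈ Finset.range (M + 1), α n = 1)
    (κ : ℝ) (hκdef : κ = ∑ n ∈ Finset.range (M + 1), (n : ℝ) * α n) (hκpos : 0 < κ)
    (h : 𝒳 → ℝ) (c lam : ℝ)
    (hc1 : κ * ∑ x, ν x * h x < c)
    (hc2 : c < κ * Finset.univ.sup' Finset.univ_nonempty h)
    (hlam : 0 < lam)
    (γ : ℕ → 𝒳 → ℝ)
    (hγdef : ∀ n x, γ n x =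
      α n * ν x * Real.exp (lam * n * h x) / ∑ y, ν y * Real.exp (lam * n * h y))
    (hγc : ∑ n ∈ Finset.range (M + 1), ∑ x, (n : ℝ) * h x * γ n x = c)
    (ψ : 𝒳 → ℝ)
    (hψdef : ∀ x, ψ x = (1 / κ) * ∑ n ∈ Finset.range (M + 1), (n : ℝ) * γ n x)
    (μstar : T1 𝒳 → ℝ)
    (hμstar : ∀ τ : T1 𝒳,
      μstar τ = γ (Multiset.card τ.2) τ.1 * ordCoeff τ.2 * (τ.2.map ψ).prod) :
    ((∀ τ, 0 ≤ μstar τ) ∧ HasSum μstar 1 ∧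
        HasSum (fun τ : T1 𝒳 => μstar τ * (τ.2.map h).sum) c) ∧
      rate ν α μstar =
        relEnt (fun p : ℕ × 𝒳 => γ p.1 p.2) (fun p : ℕ × 𝒳 => α p.1 * ν p.2) ∧
      ∀ μ : T1 𝒳 → ℝ, (∀ τ, 0 ≤ μ τ) → HasSum μ 1 →
        (Summable fun τ : T1 𝒳 => μ τ * (τ.2.map h).sum) →
        c ≤ ∑' τ : T1 𝒳, μ τ * (τ.2.map h).sum →
        relEnt (fun p : ℕ × 𝒳 => γ p.1 p.2) (fun p : ℕ × 𝒳 => α p.1 * ν p.2) ≤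
            rate ν α μ ∧
          (rate ν α μ =
              relEnt (fun p : ℕ × 𝒳 => γ p.1 p.2) (fun p : ℕ × 𝒳 => α p.1 * ν p.2) ↔
            μ = μstar) := by
  subst hκdef
  have hS : GibbsSetup ν M α := ⟨hν0, hν1, hα0, hαsupp, hα1, hκpos⟩
  obtain rfl : γ = gibbsTilt ν α h lam := funext₂ hγdef
  obtain rfl : ψ = sizeBiased M (gibbsTilt ν α h lam) := funext fun x => by
    rw [hψdef, sizeBiased, meanDegree_eq (sum_gibbsTilt h lam hν0), one_div_mul_eq_div]
  obtain rfl : μstar = gibbsMinimizer ν M α h lam := funext hμstar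
  obtain rfl : degreeWeightedMean M h (gibbsTilt ν α h lam) = c := hγc
  have hmin : IsAdmissible ν α (gibbsMinimizer ν M α h lam) := hS.isAdmissible_gibbsMinimizer
  have hmean := hmin.hasSum_sum_map hS h
  rw [hS.rootDegLaw_gibbsMinimizer] at hmean
  exact ⟨⟨hmin.nonneg, hmin.hasSum_one hS, hmean⟩, hS.rate_gibbsMinimizer,
    fun μ hμ0 _ _ hμc => ⟨hS.relEnt_gibbsTilt_le_rate hlam.le hμ0 hμc,
      hS.rate_eq_relEnt_gibbsTilt_iff hlam.le hμ0 hμc⟩⟩
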